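/- Let P_1, …, P_l be lattice polytopes in ℝ^n with dim(P_1+⋯+P_l) = n, and let P := P_1 * ⋯ * P_l be their Cayley polytope. Then P is a Gorenstein polytope of codegree l if and only if the Minkowski sum P_1 + ⋯ + P_l is reflexive. -/

import Mathlib

open Pointwise

/-- A point of `ℝ^d` is a lattice point if all its coordinates are integers. -/
def IsLatticePt {d : ℕ} (x : Fin d → ℝ) : Prop := ∀ i, ∃ z : ℤ, x i = (z : ℝ)

/-- A lattice polytope is the (non-empty) convex hull of finitely many lattice points. -/
def IsLatticePolytope {d : ℕ} (P : Set (Fin d → ℝ)) : Prop :=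
  ∃ V : Finset (Fin d → ℝ), V.Nonempty ∧ (∀ v ∈ V, IsLatticePt v) ∧
    P = convexHull ℝ (V : Set (Fin d → ℝ))

/-- The dimension of a polytope: the dimension of the direction of its affine hull. -/
noncomputable def polyDim {d : ℕ} (P : Set (Fin d → ℝ)) : ℕ :=
  Module.finrank ℝ (affineSpan ℝ P).direction

/-- A polytope is hollow if its relative interior contains no lattice point. -/
def IsHollow {d : ℕ} (P : Set (Fin d → ℝ)) : Prop :=
  ∀ x ∈ intrinsicInterior ℝ P, ¬ IsLatticePt x

/-- A facet of `P`: a non-empty exposed face of dimension `dim P - 1`. -/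
def IsFacet {d : ℕ} (P F : Set (Fin d → ℝ)) : Prop :=
  IsExposed ℝ P F ∧ F.Nonempty ∧ polyDim F + 1 = polyDim P

/-- An affine functional is integral on `P` if it takes integer values on all
lattice points of the affine hull of `P`. -/
def IsIntegralOn {d : ℕ} (P : Set (Fin d → ℝ)) (u : (Fin d → ℝ) →ᵃ[ℝ] ℝ) : Prop :=
  ∀ y ∈ affineSpan ℝ P, IsLatticePt y → ∃ z : ℤ, u y = (z : ℝ)

/-- `P` is reflexive: there is a lattice point `x` in the relative interior of `P`
such that every facet of `P` has lattice distance one from `x`, i.e. for every facet `F`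
there is an integral affine functional that is constant on `F` and exceeds its value
at `x` by exactly `1`. -/
def IsReflexivePolytope {d : ℕ} (P : Set (Fin d → ℝ)) : Prop :=
  ∃ x ∈ intrinsicInterior ℝ P, IsLatticePt x ∧
    ∀ F : Set (Fin d → ℝ), IsFacet P F →
      ∃ u : (Fin d → ℝ) →ᵃ[ℝ] ℝ, IsIntegralOn P u ∧ ∀ f ∈ F, u f = u x + 1

/-- `P` is Gorenstein if some positive integer multiple `r • P` is reflexive. -/
def IsGorenstein {d : ℕ} (P : Set (Fin d → ℝ)) : Prop :=
  ∃ r : ℕ, 0 < r ∧ IsReflexivePolytope ((r : ℝ) • P)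

/-- `P` is Gorenstein of codegree `r` if `r • P` is reflexive (`r` positive). -/
def IsGorensteinOfCodeg {d : ℕ} (P : Set (Fin d → ℝ)) (r : ℕ) : Prop :=
  0 < r ∧ IsReflexivePolytope ((r : ℝ) • P)

/-- The codegree of `P`: the smallest positive integer `r` such that `r • P` is not hollow. -/
noncomputable def polyCodeg {d : ℕ} (P : Set (Fin d → ℝ)) : ℕ :=
  sInf {r : ℕ | 0 < r ∧ ¬ IsHollow ((r : ℝ) • P)}

/-- The degree of `P`: `dim P + 1 - codeg P`. -/
noncomputable def polyDeg {d : ℕ} (P : Set (Fin d → ℝ)) : ℕ :=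
  polyDim P + 1 - polyCodeg P

/-- Unimodular equivalence of lattice polytopes: an affine map carrying `P` onto `Q`,
with an affine inverse on affine hulls, such that both maps preserve lattice points of
the affine hulls. -/
def LatticeIso {d e : ℕ} (P : Set (Fin d → ℝ)) (Q : Set (Fin e → ℝ)) : Prop :=
  ∃ (f : (Fin d → ℝ) →ᵃ[ℝ] (Fin e → ℝ)) (g : (Fin e → ℝ) →ᵃ[ℝ] (Fin d → ℝ)),
    f '' P = Q ∧ g '' Q = P ∧
    (∀ x ∈ affineSpan ℝ P, g (f x) = x) ∧ (∀ y ∈ affineSpan ℝ Q, f (g y) = y) ∧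
    (∀ x ∈ affineSpan ℝ P, IsLatticePt x → IsLatticePt (f x)) ∧
    (∀ y ∈ affineSpan ℝ Q, IsLatticePt y → IsLatticePt (g y))

/-- The lattice pyramid `conv(P' × {0}, (0,1))` over `P' ⊆ ℝ^m`. -/
def pyramidOver {m : ℕ} (P' : Set (Fin m → ℝ)) : Set (Fin (m + 1) → ℝ) :=
  convexHull ℝ ((fun x => Fin.snoc x (0 : ℝ)) '' P' ∪ {Fin.snoc (0 : Fin m → ℝ) (1 : ℝ)})

/-- `P` is a lattice pyramid if it is a single lattice point or is isomorphic to a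
lattice pyramid over a lattice polytope. -/
def IsLatticePyramid {d : ℕ} (P : Set (Fin d → ℝ)) : Prop :=
  (∃ x : Fin d → ℝ, IsLatticePt x ∧ P = {x}) ∨
  ∃ (m : ℕ) (P' : Set (Fin m → ℝ)), IsLatticePolytope P' ∧ LatticeIso P (pyramidOver P')

/-- The Cayley polytope `P_1 * ⋯ * P_l ⊆ ℝ^{n+l}` of `P_1, …, P_l ⊆ ℝ^n`:
the convex hull of the sets `P_i × {e_i}`. -/
def cayley {n l : ℕ} (P : Fin l → Set (Fin n → ℝ)) : Set (Fin (n + l) → ℝ) :=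
  convexHull ℝ (⋃ i : Fin l, (fun x => Fin.append x (Pi.single i (1 : ℝ))) '' P i)

/-- The Cayley polytope `F * G ⊆ ℝ^{n+2}` of two polytopes `F, G ⊆ ℝ^n`. -/
def cayleyTwo {n : ℕ} (F G : Set (Fin n → ℝ)) : Set (Fin (n + 2) → ℝ) :=
  convexHull ℝ
    ((fun x => Fin.append x ![(1 : ℝ), 0]) '' F ∪ (fun x => Fin.append x ![(0 : ℝ), 1]) '' G)

/-- `P` is a Cayley join of `F` and `G` if `P ≅ F * G` and `dim F + dim G = dim P - 1`. -/
def IsCayleyJoin {d n : ℕ} (P : Set (Fin d → ℝ)) (F G : Set (Fin n → ℝ)) : Prop :=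
  LatticeIso P (cayleyTwo F G) ∧ polyDim F + polyDim G + 1 = polyDim P

/-- `P` is reducible with factors `F` and `G`: a Cayley join with
`codeg F + codeg G = codeg P`. -/
def IsReducibleWith {d n : ℕ} (P : Set (Fin d → ℝ)) (F G : Set (Fin n → ℝ)) : Prop :=
  IsCayleyJoin P F G ∧ polyCodeg F + polyCodeg G = polyCodeg P

/-- `P` is reducible: it is a single lattice point (by convention) or is reducible
with some factors `F` and `G` which are lattice polytopes. -/
def IsReducible {d : ℕ} (P : Set (Fin d → ℝ)) : Prop :=
  (∃ x : Fin d → ℝ, IsLatticePt x ∧ P = {x}) ∨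
  ∃ (n : ℕ) (F G : Set (Fin n → ℝ)), IsLatticePolytope F ∧ IsLatticePolytope G ∧
    IsReducibleWith P F G

/-- `P` is a Cayley polytope: a single lattice point, or isomorphic to a Cayley polytope
of `l > 1` lattice polytopes. -/
def IsCayleyPolytope {d : ℕ} (P : Set (Fin d → ℝ)) : Prop :=
  (∃ x : Fin d → ℝ, IsLatticePt x ∧ P = {x}) ∨
  ∃ (n l : ℕ) (Q : Fin l → Set (Fin n → ℝ)), 1 < l ∧ (∀ i, IsLatticePolytope (Q i)) ∧
    LatticeIso P (cayley Q)

/-- `P` is IDP if for every `k ≥ 2` every lattice point of `k • P` is a sum of `k`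
lattice points of `P`. -/
def IsIDP {d : ℕ} (P : Set (Fin d → ℝ)) : Prop :=
  ∀ k : ℕ, 2 ≤ k → ∀ x : Fin d → ℝ, IsLatticePt x → x ∈ (k : ℝ) • P →
    ∃ p : Fin k → (Fin d → ℝ), (∀ i, p i ∈ P ∧ IsLatticePt (p i)) ∧ x = ∑ i, p i

/-- The standard simplex `Δ_s = conv(0, e_1, …, e_s) ⊆ ℝ^s`. -/
def stdSimplexLP (s : ℕ) : Set (Fin s → ℝ) :=
  convexHull ℝ (insert 0 (Set.range fun i : Fin s => Pi.single i (1 : ℝ)))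

/-- The product of `F ⊆ ℝ^m` and `G ⊆ ℝ^n` inside `ℝ^{m+n}`. -/
def prodPoly {m n : ℕ} (F : Set (Fin m → ℝ)) (G : Set (Fin n → ℝ)) : Set (Fin (m + n) → ℝ) :=
  (fun p : (Fin m → ℝ) × (Fin n → ℝ) => Fin.append p.1 p.2) '' (F ×ˢ G)

/-- The free join `conv(F × 0 × {0} ∪ 0 × G × {1}) ⊆ ℝ^m × ℝ^n × ℝ`. -/
def freeJoin {m n : ℕ} (F : Set (Fin m → ℝ)) (G : Set (Fin n → ℝ)) :
    Set (Fin (m + n + 1) → ℝ) :=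
  convexHull ℝ
    ((fun x => Fin.snoc (Fin.append x (0 : Fin n → ℝ)) (0 : ℝ)) '' F ∪
     (fun y => Fin.snoc (Fin.append (0 : Fin m → ℝ) y) (1 : ℝ)) '' G)

/-
Write `S = P_1 + ⋯ + P_l` and `Q = l • (P_1 * ⋯ * P_l)`, with points `(y, m)`, `m` being the
vector of heights. The map `y ↦ (y, 1)` embeds `S` as a slice of `Q`, and for `a_i ∈ P_i` the map
`(y, m) ↦ y + ∑ i, (1 - m_i) a_i` retracts the affine span of `Q` onto that of `S`. A lattice
point in the relative interior of `Q` has positive integral heights with sum `l`, so it lies in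
the slice, and the relative interior of `Q` meets the slice in that of `S`. A facet of `Q` either
lies in some hyperplane `m_i = 0`, which has lattice distance one from the slice, or has the form
`l • (B_1 * ⋯ * B_l)` with `B_1 + ⋯ + B_l` a facet of `S`, and every facet of `S` arises in this
way. For the facets of the second kind, functionals at lattice distance one are transferred by
composing with the embedding or with the retraction for lattice points `a_i ∈ B_i`.
-/

section IntrinsicInterior

open Filter Topology

variable {E : Type*} [NormedAddCommGroup E] [NormedSpace ℝ E] {C : Set E} {x y : E}

theorem mem_intrinsicInterior_iff_mem_nhdsWithin :
    x ∈ intrinsicInterior ℝ C ↔ x ∈ affineSpan ℝ C ∧ C ∈ 𝓝[affineSpan ℝ C] x := by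
  simp only [mem_intrinsicInterior, mem_interior_iff_mem_nhds, Subtype.exists, exists_and_right,
    exists_eq_right, ← exists_prop (a := x ∈ _)]
  exact exists_congr fun hx => preimage_coe_mem_nhds_subtype (a := ⟨x, hx⟩)

theorem exists_one_lt_lineMap_mem_of_mem_intrinsicInterior (hx : x ∈ intrinsicInterior ℝ C)
    (hy : y ∈ C) : ∃ t > (1 : ℝ), AffineMap.lineMap y x t ∈ C := by
  obtain ⟨hxspan, hxC⟩ := mem_intrinsicInterior_iff_mem_nhdsWithin.1 hx
  have hlim : Tendsto (AffineMap.lineMap y x : ℝ → E) (𝓝[>] 1) (𝓝[affineSpan ℝ C] x) := by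
    refine tendsto_nhdsWithin_iff.2 ⟨?_, .of_forall fun t =>
      AffineMap.lineMap_mem t (subset_affineSpan ℝ C hy) hxspan⟩
    have hcont : Continuous (AffineMap.lineMap y x : ℝ → E) := AffineMap.lineMap_continuous
    simpa only [AffineMap.lineMap_apply_one] using (hcont.tendsto 1).mono_left nhdsWithin_le_nhds
  obtain ⟨t, htC, ht⟩ := ((hlim.eventually hxC).and self_mem_nhdsWithin).exists
  exact ⟨t, ht, htC⟩

/- Shrinking towards `z` by the factor `r` maps `C` into itself and `y` to `x`, so it carries a
relative neighbourhood of `y` contained in `C` to one of `x`. -/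
theorem lineMap_mem_intrinsicInterior (hC : Convex ℝ C) {z : E} {r : ℝ} (hz : z ∈ C)
    (hy : y ∈ intrinsicInterior ℝ C) (hr₀ : 0 < r) (hr₁ : r ≤ 1) :
    AffineMap.lineMap z y r ∈ intrinsicInterior ℝ C := by
  obtain ⟨hyspan, hyC⟩ := mem_intrinsicInterior_iff_mem_nhdsWithin.1 hy
  have hzspan := subset_affineSpan ℝ C hz
  have hlim : Tendsto (fun w => AffineMap.lineMap z w r⁻¹)
      (𝓝[affineSpan ℝ C] (AffineMap.lineMap z y r)) (𝓝[affineSpan ℝ C] y) := by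
    refine tendsto_nhdsWithin_iff.2 ⟨?_, ?_⟩
    · have hcont : Continuous fun w => AffineMap.lineMap z w r⁻¹ := by
        simp only [AffineMap.lineMap_apply_module]
        fun_prop
      convert (hcont.tendsto (AffineMap.lineMap z y r)).mono_left nhdsWithin_le_nhds
      simp [hr₀.ne']
    · filter_upwards [self_mem_nhdsWithin] with w hw using AffineMap.lineMap_mem _ hzspan hw
  refine mem_intrinsicInterior_iff_mem_nhdsWithin.2
    ⟨AffineMap.lineMap_mem r hzspan hyspan, ?_⟩
  filter_upwards [hlim hyC] with w hw
  have hwz : AffineMap.lineMap z (AffineMap.lineMap z w r⁻¹) r = w := by simp [hr₀.ne']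
  exact hwz ▸ hC.lineMap_mem hz hw ⟨hr₀.le, hr₁⟩

theorem mem_intrinsicInterior_iff_forall_exists_one_lt_lineMap_mem [FiniteDimensional ℝ E]
    (hC : Convex ℝ C) :
    x ∈ intrinsicInterior ℝ C ↔
      x ∈ C ∧ ∀ y ∈ C, ∃ t > (1 : ℝ), AffineMap.lineMap y x t ∈ C := by
  refine ⟨fun hx => ⟨intrinsicInterior_subset hx, fun y hy =>
    exists_one_lt_lineMap_mem_of_mem_intrinsicInterior hx hy⟩, fun ⟨hx, hext⟩ => ?_⟩
  obtain ⟨y, hy⟩ := (intrinsicInterior_nonempty hC).2 ⟨x, hx⟩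
  obtain ⟨t, ht, hz⟩ := hext y (intrinsicInterior_subset hy)
  have ht₀ : 0 < t := one_pos.trans ht
  have hxz : AffineMap.lineMap (AffineMap.lineMap y x t) y (1 - t⁻¹) = x := by
    simp [AffineMap.lineMap_apply_one_sub, ht₀.ne']
  rw [← hxz]
  exact lineMap_mem_intrinsicInterior hC hz hy (sub_pos.2 (inv_lt_one_of_one_lt₀ ht))
    (sub_le_self 1 (inv_nonneg.2 ht₀.le))

theorem pos_of_mem_intrinsicInterior (hx : x ∈ intrinsicInterior ℝ C) (f : E →ᵃ[ℝ] ℝ)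
    (hf : ∀ z ∈ C, 0 ≤ f z) (hy : y ∈ C) (hfy : 0 < f y) : 0 < f x := by
  obtain ⟨t, ht, hz⟩ := exists_one_lt_lineMap_mem_of_mem_intrinsicInterior hx hy
  have hfz := hf _ hz
  rw [AffineMap.apply_lineMap, AffineMap.lineMap_apply_ring'] at hfz
  have : 0 < t * f x := by linarith [mul_pos (sub_pos.2 ht) hfy]
  exact pos_of_mul_pos_right this (one_pos.trans ht).le

end IntrinsicInterior

section Exposed

variable {E F : Type*} [NormedAddCommGroup E] [NormedSpace ℝ E] [NormedAddCommGroup F]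
  [NormedSpace ℝ F] {ι : Type*}

theorem toExposed_smul (f : StrongDual ℝ E) (A : Set E) {c : ℝ} (hc : 0 < c) :
    f.toExposed (c • A) = c • f.toExposed A := by
  ext x
  simp only [Set.mem_smul_set, ContinuousLinearMap.toExposed, Set.mem_ofPred_eq]
  constructor
  · rintro ⟨⟨x, hx, rfl⟩, hmax⟩
    refine ⟨x, ⟨hx, fun y hy => ?_⟩, rfl⟩
    simpa [hc] using hmax _ ⟨y, hy, rfl⟩
  · rintro ⟨x, ⟨hx, hmax⟩, rfl⟩
    refine ⟨⟨x, hx, rfl⟩, ?_⟩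
    rintro _ ⟨y, hy, rfl⟩
    simpa [hc] using hmax y hy

theorem toExposed_image (f : StrongDual ℝ F) (v : StrongDual ℝ E) (g : E → F) (c : ℝ)
    (hfg : ∀ x, f (g x) = v x + c) (A : Set E) : f.toExposed (g '' A) = g '' v.toExposed A := by
  ext z
  simp only [ContinuousLinearMap.toExposed, Set.mem_ofPred_eq, Set.mem_image,
    forall_exists_index, and_imp, forall_apply_eq_imp_iff₂]
  constructor
  · rintro ⟨⟨x, hx, rfl⟩, hmax⟩
    exact ⟨x, ⟨hx, by simpa [hfg] using hmax⟩, rfl⟩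
  · rintro ⟨x, ⟨hx, hmax⟩, rfl⟩
    exact ⟨⟨x, hx, rfl⟩, by simpa [hfg] using hmax⟩

theorem toExposed_iUnion (f : StrongDual ℝ E) (A : ι → Set E)
    (hA : ∀ i, (A i ∩ f.toExposed (⋃ j, A j)).Nonempty) :
    f.toExposed (⋃ i, A i) = ⋃ i, f.toExposed (A i) := by
  choose a ha hamax using hA
  ext x
  simp only [Set.mem_iUnion]
  constructor
  · rintro ⟨hx, hmax⟩
    obtain ⟨i, hi⟩ := Set.mem_iUnion.1 hx
    exact ⟨i, hi, fun y hy => hmax y (Set.mem_iUnion_of_mem i hy)⟩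
  · rintro ⟨i, hi, hmax⟩
    exact ⟨Set.mem_iUnion_of_mem i hi, fun y hy =>
      ((hamax i).2 y hy).trans (hmax (a i) (ha i))⟩

theorem toExposed_subset_toExposed_convexHull (f : StrongDual ℝ E) (s : Set E) :
    f.toExposed s ⊆ f.toExposed (convexHull ℝ s) := fun x ⟨hx, hmax⟩ =>
  ⟨subset_convexHull ℝ s hx, fun _ hy =>
    convexHull_min hmax (convex_halfSpace_le f.isLinear (f x)) hy⟩

theorem toExposed_convexHull (f : StrongDual ℝ E) (s : Set E) :
    f.toExposed (convexHull ℝ s) = convexHull ℝ (f.toExposed s) := by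
  refine subset_antisymm ?_ (convexHull_min (toExposed_subset_toExposed_convexHull f s)
    (ContinuousLinearMap.toExposed.isExposed.convex (convex_convexHull ℝ s)))
  rintro x ⟨hx, hmax⟩
  rw [convexHull_eq] at hx
  obtain ⟨κ, t, w, z, hw₀, hw₁, hz, rfl⟩ := hx
  have hle : ∀ i ∈ t, f (z i) ≤ f (t.centerMass w z) := fun i hi =>
    hmax _ (subset_convexHull ℝ s (hz i hi))
  have hsum : ∑ i ∈ t, w i * (f (t.centerMass w z) - f (z i)) = 0 := by
    simp only [mul_sub, Finset.sum_sub_distrib, ← Finset.sum_mul, hw₁]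
    simp [Finset.centerMass_eq_of_sum_1 t z hw₁]
  have hface : ∀ i ∈ t, w i ≠ 0 → f (z i) = f (t.centerMass w z) := fun i hi hwi => by
    have := (Finset.sum_eq_zero_iff_of_nonneg fun i hi =>
      mul_nonneg (hw₀ i hi) (sub_nonneg.2 (hle i hi))).1 hsum i hi
    exact (sub_eq_zero.1 ((mul_eq_zero.1 this).resolve_left hwi)).symm
  rw [← Finset.centerMass_filter_ne_zero]
  refine Finset.centerMass_mem_convexHull _ (fun i hi => hw₀ i (Finset.mem_of_mem_filter i hi))
    ?_ fun i hi => ?_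
  · rw [Finset.sum_filter_ne_zero, hw₁]
    exact one_pos
  · obtain ⟨hit, hwi⟩ := Finset.mem_filter.1 hi
    exact ⟨hz i hit, fun y hy =>
      (hmax y (subset_convexHull ℝ s hy)).trans_eq (hface i hit hwi).symm⟩

end Exposed

section MinkowskiSum

variable {E ι : Type*} [Fintype ι] {A : ι → Set E} {p q : E} {i : ι}

theorem update_sum_mem_sum [AddCommMonoid E] [DecidableEq ι] {a : ι → E} (ha : ∀ i, a i ∈ A i)
    (hq : q ∈ A i) : ∑ j, Function.update a i q j ∈ ∑ j, A j := by
  refine Set.finsetSum_mem_finsetSum _ _ _ fun j _ => ?_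
  obtain rfl | hji := eq_or_ne j i
  · simpa using hq
  · simpa [hji] using ha j

theorem sum_update_sub_sum [AddCommGroup E] [DecidableEq ι] (a : ι → E) (i : ι) (q : E) :
    ∑ j, Function.update a i q j - ∑ j, a j = q - a i := by
  rw [← Finset.sum_sub_distrib, Finset.sum_eq_single i] <;> simp +contextual

end MinkowskiSum

section VectorSpan

variable {k E F G : Type*}

theorem vectorSpan_smul [Field k] [AddCommGroup E] [Module k E] {c : k} (hc : c ≠ 0) (s : Set E) :
    vectorSpan k (c • s) = vectorSpan k s := by
  have h := AffineMap.map_vectorSpan (f := (c • LinearMap.id : E →ₗ[k] E).toAffineMap) (s := s)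
  simpa [Submodule.map_smul _ _ _ hc] using h.symm

theorem finrank_map_add_finrank_comap [DivisionRing k] [AddCommGroup E] [Module k E]
    [AddCommGroup F] [Module k F] [AddCommGroup G] [Module k G] [FiniteDimensional k E]
    {f : E →ₗ[k] F} {g : G →ₗ[k] E} (hg : Function.Injective g) (hfg : Function.Exact g f)
    (W : Submodule k E) :
    Module.finrank k (W.map f) + Module.finrank k (W.comap g) = Module.finrank k W := by
  rw [← LinearMap.finrank_range_add_finrank_ker (f.domRestrict W), LinearMap.range_domRestrict]
  congr 1
  rw [LinearMap.ker_domRestrict, hfg.linearMap_ker_eq, ← Submodule.finrank_map_subtype_eq,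
    Submodule.map_comap_subtype, inf_comm, ← Submodule.map_comap_eq]
  exact (Submodule.equivMapOfInjective g hg _).finrank_eq

theorem sub_mem_vectorSpan_sum [Ring k] [AddCommGroup E] [Module k E] {ι : Type*} [Fintype ι]
    {A : ι → Set E} (hA : ∀ i, (A i).Nonempty) {i : ι} {p q : E} (hp : p ∈ A i) (hq : q ∈ A i) :
    q - p ∈ vectorSpan k (∑ i, A i) := by
  classical
  choose a ha using hA
  have h := vsub_mem_vectorSpan k (update_sum_mem_sum ha hq) (update_sum_mem_sum ha hp)
  rwa [vsub_eq_sub, ← sub_sub_sub_cancel_right _ _ (∑ j, a j), sum_update_sub_sum,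
    sum_update_sub_sum, sub_sub_sub_cancel_right] at h

end VectorSpan

section ConvexHullCayley

variable {E ι : Type*} [AddCommGroup E] [Module ℝ E] [Fintype ι] {A : ι → Set E}

theorem convex_setOf_fst_mem_sum_snd_smul (hA : ∀ i, Convex ℝ (A i)) :
    Convex ℝ {p : E × (ι → ℝ) | 0 ≤ p.2 ∧ ∑ i, p.2 i = 1 ∧ p.1 ∈ ∑ i, p.2 i • A i} := by
  rintro ⟨x, m⟩ ⟨hm, hm₁, hx⟩ ⟨x', m'⟩ ⟨hm', hm'₁, hx'⟩ a b ha hb hab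
  refine ⟨add_nonneg (smul_nonneg ha hm) (smul_nonneg hb hm'), ?_, ?_⟩
  · simpa [Finset.sum_add_distrib, ← Finset.mul_sum, hm₁, hm'₁] using hab
  · have hsum : ∑ i, (a * m i + b * m' i) • A i = a • ∑ i, m i • A i + b • ∑ i, m' i • A i := by
      simp only [Finset.smul_sum, smul_smul, ← Finset.sum_add_distrib]
      exact Finset.sum_congr rfl fun i _ =>
        (hA i).add_smul (mul_nonneg ha (hm i)) (mul_nonneg hb (hm' i))
    exact hsum ▸ Set.add_mem_add (Set.smul_mem_smul_set hx) (Set.smul_mem_smul_set hx')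

theorem convexHull_iUnion_prod_single [DecidableEq ι] (hA : ∀ i, Convex ℝ (A i))
    (hne : ∀ i, (A i).Nonempty) :
    convexHull ℝ (⋃ i, (fun x => (x, (Pi.single i 1 : ι → ℝ))) '' A i) =
      {p : E × (ι → ℝ) | 0 ≤ p.2 ∧ ∑ i, p.2 i = 1 ∧ p.1 ∈ ∑ i, p.2 i • A i} := by
  refine subset_antisymm (convexHull_min (Set.iUnion_subset fun i => ?_)
    (convex_setOf_fst_mem_sum_snd_smul hA)) ?_
  · rintro _ ⟨x, hx, rfl⟩
    have hsum : ∑ j, (Pi.single i 1 : ι → ℝ) j • A j = A i := by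
      rw [Finset.sum_eq_single i (fun j _ hj => by simp [hj, Set.zero_smul_set (hne j)]) (by simp)]
      simp
    exact ⟨Pi.single_nonneg.2 zero_le_one, by simp, by simpa [hsum] using hx⟩
  · rintro ⟨x, m⟩ ⟨hm, hm₁, hx⟩
    obtain ⟨y, hy, rfl⟩ := Set.mem_fintype_sum _ _ |>.1 hx
    choose q hq hqy using hy
    have hp : (∑ i, y i, m) = ∑ i, m i • (q i, Pi.single i (1 : ℝ)) := by
      ext j
      · simp [Prod.fst_sum, hqy]
      · simp [Prod.snd_sum, Finset.sum_apply, Pi.single_apply]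
    rw [hp]
    exact (convex_convexHull ℝ _).sum_mem (fun i _ => hm i) hm₁ fun i _ =>
      subset_convexHull ℝ _ (Set.mem_iUnion_of_mem i ⟨q i, hq i, rfl⟩)

end ConvexHullCayley

section Append

variable {n l : ℕ}

theorem append_add_append {α : Type*} [Add α] (y y' : Fin n → α) (m m' : Fin l → α) :
    Fin.append y m + Fin.append y' m' = Fin.append (y + y') (m + m') := by
  ext i
  induction i using Fin.addCases <;> simp

theorem smul_append {M α : Type*} [SMul M α] (c : M) (y : Fin n → α) (m : Fin l → α) :
    c • Fin.append y m = Fin.append (c • y) (c • m) := by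
  ext i
  induction i using Fin.addCases <;> simp

/-- Concatenation of tuples `R^n × R^l ≃ R^{n+l}` as a continuous linear equivalence; it turns the
ambient space of a Cayley polytope into a product. -/
def appendCLE (R : Type*) [Semiring R] [TopologicalSpace R] (n l : ℕ) :
    ((Fin n → R) × (Fin l → R)) ≃L[R] (Fin (n + l) → R) where
  __ := Fin.appendHomeomorph n l
  map_add' p q := (append_add_append p.1 q.1 p.2 q.2).symm
  map_smul' c p := (smul_append c p.1 p.2).symm

variable {R : Type*} [Semiring R] [TopologicalSpace R]

@[simp]
theorem appendCLE_apply (p : (Fin n → R) × (Fin l → R)) : appendCLE R n l p = Fin.append p.1 p.2 :=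
  rfl

@[simp]
theorem appendCLE_symm_append (y : Fin n → R) (m : Fin l → R) :
    (appendCLE R n l).symm (Fin.append y m) = (y, m) :=
  (appendCLE R n l).symm_apply_apply (y, m)

theorem isLatticePt_append {y : Fin n → ℝ} {m : Fin l → ℝ} :
    IsLatticePt (Fin.append y m) ↔ IsLatticePt y ∧ IsLatticePt m := by
  simp [IsLatticePt, Fin.forall_fin_add]

end Append

section Cayley

variable {n l : ℕ} {A : Fin l → Set (Fin n → ℝ)} {y : Fin n → ℝ} {m : Fin l → ℝ} {c : ℝ}

theorem append_mem_cayley_iff (hA : ∀ i, Convex ℝ (A i)) (hne : ∀ i, (A i).Nonempty) :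
    Fin.append y m ∈ cayley A ↔ 0 ≤ m ∧ ∑ i, m i = 1 ∧ y ∈ ∑ i, m i • A i := by
  have himage : cayley A =
      appendCLE ℝ n l '' convexHull ℝ (⋃ i, (fun x => (x, Pi.single i 1)) '' A i) := by
    refine .trans ?_ ((appendCLE ℝ n l).toLinearEquiv.toLinearMap.image_convexHull _).symm
    simp only [cayley, Set.image_iUnion, Set.image_image]
    rfl
  rw [himage, convexHull_iUnion_prod_single hA hne]
  exact (appendCLE ℝ n l).injective.mem_set_image (a := (y, m))

theorem append_mem_smul_cayley_iff (hA : ∀ i, Convex ℝ (A i)) (hne : ∀ i, (A i).Nonempty)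
    (hc : 0 < c) :
    Fin.append y m ∈ c • cayley A ↔ 0 ≤ m ∧ ∑ i, m i = c ∧ y ∈ ∑ i, m i • A i := by
  have hsum : ∑ i, (c⁻¹ • m) i • A i = c⁻¹ • ∑ i, m i • A i := by
    simp [Finset.smul_sum, mul_smul]
  rw [Set.mem_smul_set_iff_inv_smul_mem₀ hc.ne', smul_append, append_mem_cayley_iff hA hne, hsum,
    Set.smul_mem_smul_set_iff₀ (inv_ne_zero hc.ne'),
    smul_nonneg_iff_nonneg_of_pos_left (inv_pos.2 hc)]
  simp [← Finset.mul_sum, inv_mul_eq_one₀ hc.ne', eq_comm]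

theorem append_one_mem_smul_cayley_iff (hA : ∀ i, Convex ℝ (A i)) (hne : ∀ i, (A i).Nonempty)
    (hl : 0 < l) : Fin.append y 1 ∈ (l : ℝ) • cayley A ↔ y ∈ ∑ i, A i := by
  rw [append_mem_smul_cayley_iff hA hne (Nat.cast_pos.2 hl)]
  simp

theorem append_single_mem_cayley {i : Fin l} {x : Fin n → ℝ} (hx : x ∈ A i) :
    Fin.append x (Pi.single i 1) ∈ cayley A :=
  subset_convexHull ℝ _ (Set.mem_iUnion_of_mem i ⟨x, hx, rfl⟩)

end Cayley

section Slice

variable {n l : ℕ} {A : Fin l → Set (Fin n → ℝ)} {a : Fin l → Fin n → ℝ} {y : Fin n → ℝ}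
  {m : Fin l → ℝ} {z : Fin (n + l) → ℝ}

/-- The affine embedding `y ↦ (y, 1, …, 1)`, which identifies `P_1 + ⋯ + P_l` with a slice of the
dilated Cayley polytope `l • (P_1 * ⋯ * P_l)`. -/
def cayleySlice (n l : ℕ) : (Fin n → ℝ) →ᵃ[ℝ] (Fin (n + l) → ℝ) :=
  ((appendCLE ℝ n l).toLinearMap ∘ₗ LinearMap.inl ℝ _ _).toAffineMap +
    AffineMap.const ℝ _ (Fin.append 0 1)

/-- The affine retraction `(y, m) ↦ y + ∑ i, (1 - m_i) a_i` of `cayleySlice`. For `a_i ∈ P_i` it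
maps the affine span of `l • (P_1 * ⋯ * P_l)` onto that of `P_1 + ⋯ + P_l`. -/
def cayleyRetraction (a : Fin l → Fin n → ℝ) : (Fin (n + l) → ℝ) →ᵃ[ℝ] (Fin n → ℝ) :=
  ((LinearMap.fst ℝ _ _ - (∑ i, (LinearMap.proj i).smulRight (a i)) ∘ₗ LinearMap.snd ℝ _ _) ∘ₗ
    (appendCLE ℝ n l).symm.toLinearMap).toAffineMap + AffineMap.const ℝ _ (∑ i, a i)

@[simp]
theorem cayleySlice_apply (y : Fin n → ℝ) : cayleySlice n l y = Fin.append y 1 := by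
  simp [cayleySlice, append_add_append]

theorem cayleyRetraction_append (a : Fin l → Fin n → ℝ) (y : Fin n → ℝ) (m : Fin l → ℝ) :
    cayleyRetraction a (Fin.append y m) = y + ∑ i, (1 - m i) • a i := by
  simp [cayleyRetraction, sub_smul, sub_add_eq_add_sub, add_sub_assoc]

@[simp]
theorem cayleyRetraction_append_one (a : Fin l → Fin n → ℝ) (y : Fin n → ℝ) :
    cayleyRetraction a (Fin.append y 1) = y := by
  simp [cayleyRetraction_append]

theorem cayleyRetraction_mem_affineSpan (hA : ∀ i, Convex ℝ (A i)) (hl : 0 < l)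
    (ha : ∀ i, a i ∈ A i) (hz : z ∈ affineSpan ℝ ((l : ℝ) • cayley A)) :
    cayleyRetraction a z ∈ affineSpan ℝ (∑ i, A i) := by
  have hne i : (A i).Nonempty := ⟨a i, ha i⟩
  suffices h : affineSpan ℝ ((l : ℝ) • cayley A) ≤
      (affineSpan ℝ (∑ i, A i)).comap (cayleyRetraction a) from h hz
  refine affineSpan_le.2 fun z hz => ?_
  obtain ⟨⟨y, m⟩, rfl⟩ := (appendCLE ℝ n l).surjective z
  obtain ⟨-, -, hy⟩ := (append_mem_smul_cayley_iff hA hne (Nat.cast_pos.2 hl)).1 hz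
  obtain ⟨x, hx, rfl⟩ := (Set.mem_fintype_sum _ _).1 hy
  choose q hq hqx using hx
  have hadd : cayleyRetraction a (Fin.append (∑ i, x i) m) =
      ∑ i, m i • (q i - a i) +ᵥ ∑ i, a i := by
    simp only [cayleyRetraction_append, ← hqx, ← Finset.sum_add_distrib, vadd_eq_add]
    exact Finset.sum_congr rfl fun i _ => by module
  simp only [appendCLE_apply, AffineSubspace.coe_comap, Set.mem_preimage, hadd]
  exact AffineSubspace.vadd_mem_of_mem_direction (direction_affineSpan ℝ (∑ i, A i) ▸
    Submodule.sum_mem _ fun i _ =>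
      Submodule.smul_mem _ _ (sub_mem_vectorSpan_sum hne (ha i) (hq i)))
    (subset_affineSpan ℝ _ (Set.finsetSum_mem_finsetSum _ _ _ fun i _ => ha i))

theorem append_one_mem_affineSpan_iff (hA : ∀ i, Convex ℝ (A i)) (hne : ∀ i, (A i).Nonempty)
    (hl : 0 < l) :
    Fin.append y 1 ∈ affineSpan ℝ ((l : ℝ) • cayley A) ↔ y ∈ affineSpan ℝ (∑ i, A i) := by
  constructor
  · choose a ha using hne
    exact fun h => cayleyRetraction_append_one a y ▸ cayleyRetraction_mem_affineSpan hA hl ha h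
  · suffices h : affineSpan ℝ (∑ i, A i) ≤
        (affineSpan ℝ ((l : ℝ) • cayley A)).comap (cayleySlice n l) by
      simpa using @h y
    exact affineSpan_le.2 fun y hy => subset_affineSpan ℝ _ (by
      simpa [append_one_mem_smul_cayley_iff hA hne hl] using hy)

theorem append_zero_mem_vectorSpan_iff (hA : ∀ i, Convex ℝ (A i)) (hne : ∀ i, (A i).Nonempty)
    (hl : 0 < l) :
    Fin.append y 0 ∈ vectorSpan ℝ ((l : ℝ) • cayley A) ↔ y ∈ vectorSpan ℝ (∑ i, A i) := by
  choose a ha using hne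
  have hne i : (A i).Nonempty := ⟨a i, ha i⟩
  have hp : ∑ i, a i ∈ affineSpan ℝ (∑ i, A i) :=
    subset_affineSpan ℝ _ (Set.finsetSum_mem_finsetSum _ _ _ fun i _ => ha i)
  rw [← direction_affineSpan, ← direction_affineSpan,
    ← AffineSubspace.vadd_mem_iff_mem_direction _ hp,
    ← AffineSubspace.vadd_mem_iff_mem_direction _
      ((append_one_mem_affineSpan_iff hA hne hl).2 hp),
    ← append_one_mem_affineSpan_iff hA hne hl]
  simp [append_add_append]

end Slice

section Dimension

variable {n l : ℕ} {A : Fin l → Set (Fin n → ℝ)}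

theorem polyDim_eq_finrank_vectorSpan (P : Set (Fin n → ℝ)) :
    polyDim P = Module.finrank ℝ (vectorSpan ℝ P) := by
  rw [polyDim, direction_affineSpan]

theorem finrank_vectorSpan_range_single_add_one {k ι : Type*} [DivisionRing k] [Fintype ι]
    [DecidableEq ι] [Nonempty ι] :
    Module.finrank k (vectorSpan k (Set.range fun i : ι => (Pi.single i 1 : ι → k))) + 1 =
      Fintype.card ι := by
  rw [← funext (Pi.basisFun_apply k ι)]
  exact (Pi.basisFun k ι).linearIndependent.affineIndependent.finrank_vectorSpan_add_one

theorem funLeft_natAdd_append (y : Fin n → ℝ) (m : Fin l → ℝ) :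
    LinearMap.funLeft ℝ ℝ (Fin.natAdd n) (Fin.append y m) = m :=
  funext (Fin.append_right y m)

theorem funLeft_natAdd_image_cayley (hne : ∀ i, (A i).Nonempty) :
    LinearMap.funLeft ℝ ℝ (Fin.natAdd n) '' cayley A =
      convexHull ℝ (Set.range fun i : Fin l => (Pi.single i 1 : Fin l → ℝ)) := by
  rw [cayley, LinearMap.image_convexHull]
  simp only [Set.image_iUnion, Set.image_image, funLeft_natAdd_append, (hne _).image_const,
    Set.iUnion_singleton_eq_range]

theorem polyDim_smul_cayley_add_one (hA : ∀ i, Convex ℝ (A i)) (hne : ∀ i, (A i).Nonempty)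
    (hl : 0 < l) : polyDim ((l : ℝ) • cayley A) + 1 = polyDim (∑ i, A i) + l := by
  have : Nonempty (Fin l) := ⟨⟨0, hl⟩⟩
  let heights : (Fin (n + l) → ℝ) →ₗ[ℝ] (Fin l → ℝ) := LinearMap.funLeft ℝ ℝ (Fin.natAdd n)
  let slice : (Fin n → ℝ) →ₗ[ℝ] (Fin (n + l) → ℝ) :=
    (appendCLE ℝ n l).toLinearMap ∘ₗ LinearMap.inl ℝ _ _
  have hinj : Function.Injective slice :=
    (appendCLE ℝ n l).injective.comp LinearMap.inl_injective
  have hexact : Function.Exact slice heights := fun z => by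
    obtain ⟨⟨y, m⟩, rfl⟩ := (appendCLE ℝ n l).surjective z
    rw [appendCLE_apply, funLeft_natAdd_append]
    change m = 0 ↔ ∃ y', appendCLE ℝ n l (y', 0) = appendCLE ℝ n l (y, m)
    simp [-appendCLE_apply, eq_comm]
  have hmap : ((vectorSpan ℝ ((l : ℝ) • cayley A)).map heights) =
      vectorSpan ℝ (Set.range fun i : Fin l => (Pi.single i 1 : Fin l → ℝ)) := by
    rw [vectorSpan_smul (Nat.cast_ne_zero.2 hl.ne'), ← direction_affineSpan _ (Set.range _),
      ← affineSpan_convexHull, ← funLeft_natAdd_image_cayley hne, direction_affineSpan]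
    exact AffineMap.map_vectorSpan (f := heights.toAffineMap)
  have hcomap : (vectorSpan ℝ ((l : ℝ) • cayley A)).comap slice = vectorSpan ℝ (∑ i, A i) :=
    Submodule.ext fun y => append_zero_mem_vectorSpan_iff hA hne hl
  have hrank := finrank_map_add_finrank_comap hinj hexact (vectorSpan ℝ ((l : ℝ) • cayley A))
  have hsimplex := finrank_vectorSpan_range_single_add_one (k := ℝ) (ι := Fin l)
  rw [hmap, hcomap] at hrank
  rw [Fintype.card_fin] at hsimplex
  rw [polyDim_eq_finrank_vectorSpan, polyDim_eq_finrank_vectorSpan]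
  lia

end Dimension

section RelativeInterior

variable {n l : ℕ} {A : Fin l → Set (Fin n → ℝ)} {x y : Fin n → ℝ} {m : Fin l → ℝ}

theorem lineMap_append (y y' : Fin n → ℝ) (m m' : Fin l → ℝ) (t : ℝ) :
    AffineMap.lineMap (Fin.append y m) (Fin.append y' m') t =
      Fin.append (AffineMap.lineMap y y' t) (AffineMap.lineMap m m' t) := by
  simp only [AffineMap.lineMap_apply_module, smul_append, append_add_append]

theorem mem_intrinsicInterior_of_append_one (hA : ∀ i, Convex ℝ (A i))
    (hne : ∀ i, (A i).Nonempty) (hl : 0 < l)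
    (hx : Fin.append x 1 ∈ intrinsicInterior ℝ ((l : ℝ) • cayley A)) :
    x ∈ intrinsicInterior ℝ (∑ i, A i) := by
  rw [mem_intrinsicInterior_iff_forall_exists_one_lt_lineMap_mem (convex_sum _ fun i _ => hA i),
    ← append_one_mem_smul_cayley_iff hA hne hl]
  refine ⟨intrinsicInterior_subset hx, fun y hy => ?_⟩
  obtain ⟨t, ht, hmem⟩ := exists_one_lt_lineMap_mem_of_mem_intrinsicInterior hx
    ((append_one_mem_smul_cayley_iff hA hne hl).2 hy)
  rw [lineMap_append, AffineMap.lineMap_same_apply,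
    append_one_mem_smul_cayley_iff hA hne hl] at hmem
  exact ⟨t, ht, hmem⟩

theorem convex_smul_cayley (c : ℝ) (A : Fin l → Set (Fin n → ℝ)) : Convex ℝ (c • cayley A) :=
  (convex_convexHull ℝ _).smul c

theorem exists_eq_of_mem_intrinsicInterior_sum (hx : x ∈ intrinsicInterior ℝ (∑ i, A i))
    {q : Fin l → Fin n → ℝ} (hq : ∀ i, q i ∈ A i) :
    ∃ r : ℝ, 0 < r ∧ r < 1 ∧ ∃ p : Fin l → Fin n → ℝ, (∀ i, p i ∈ A i) ∧
      x = (1 - r) • ∑ i, p i + r • ∑ i, q i := by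
  obtain ⟨s, hs, hmem⟩ := exists_one_lt_lineMap_mem_of_mem_intrinsicInterior hx
    (Set.finsetSum_mem_finsetSum _ _ _ fun i _ => hq i)
  obtain ⟨p, hp, hps⟩ := (Set.mem_fintype_sum _ _).1 hmem
  have hs₀ : 0 < s := one_pos.trans hs
  refine ⟨1 - s⁻¹, sub_pos.2 (inv_lt_one_of_one_lt₀ hs), sub_lt_self 1 (inv_pos.2 hs₀), p, hp, ?_⟩
  rw [hps, AffineMap.lineMap_apply_module]
  match_scalars <;> field_simp <;> ring

/- Extend the segment from `(∑ m_i q_i, m)` to `(x, 1)` beyond `(x, 1)` by a small `ε`. With `p` as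
in the previous lemma, the extension is a sum of nonnegative combinations of `p_i` and `q_i` whose
total weights are the heights `1 + ε (1 - m_i)`. -/
theorem append_one_mem_intrinsicInterior (hA : ∀ i, Convex ℝ (A i)) (hne : ∀ i, (A i).Nonempty)
    (hl : 0 < l) (hx : x ∈ intrinsicInterior ℝ (∑ i, A i)) :
    Fin.append x 1 ∈ intrinsicInterior ℝ ((l : ℝ) • cayley A) := by
  have hl' : (0 : ℝ) < l := Nat.cast_pos.2 hl
  rw [mem_intrinsicInterior_iff_forall_exists_one_lt_lineMap_mem (convex_smul_cayley l A),
    append_one_mem_smul_cayley_iff hA hne hl]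
  refine ⟨intrinsicInterior_subset hx, fun z hz => ?_⟩
  obtain ⟨⟨y, m⟩, rfl⟩ := (appendCLE ℝ n l).surjective z
  obtain ⟨hm, hml, hy⟩ := (append_mem_smul_cayley_iff hA hne hl').1 hz
  obtain ⟨y, hy, rfl⟩ := (Set.mem_fintype_sum _ _).1 hy
  choose q hq hqy using hy
  obtain ⟨r, hr₀, hr₁, p, hp, hxpq⟩ := exists_eq_of_mem_intrinsicInterior_sum hx hq
  set ε : ℝ := r / l
  have hεl : ε * l = r := div_mul_cancel₀ _ hl'.ne'
  have hε₀ : 0 < ε := div_pos hr₀ hl'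
  have hα : 0 ≤ (1 + ε) * (1 - r) := mul_nonneg (by positivity) (sub_nonneg.2 hr₁.le)
  have hβ i : 0 ≤ (1 + ε) * r - ε * m i := by
    have hmi : m i ≤ l := hml ▸ Finset.single_le_sum (fun j _ => hm j) (Finset.mem_univ i)
    linarith [mul_le_mul_of_nonneg_left hmi hε₀.le, mul_pos hε₀ hr₀]
  have hαβ i : AffineMap.lineMap m 1 (1 + ε) i = (1 + ε) * (1 - r) + ((1 + ε) * r - ε * m i) := by
    simp only [AffineMap.pi_lineMap_apply, AffineMap.lineMap_apply_ring', Pi.one_apply]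
    ring
  have hsplit : AffineMap.lineMap (∑ i, y i) x (1 + ε) =
      ∑ i, (((1 + ε) * (1 - r)) • p i + ((1 + ε) * r - ε * m i) • q i) := by
    simp only [AffineMap.lineMap_apply_module, hxpq, ← hqy, Finset.smul_sum,
      ← Finset.sum_add_distrib]
    exact Finset.sum_congr rfl fun i _ => by module
  refine ⟨1 + ε, lt_add_of_pos_right 1 hε₀, ?_⟩
  rw [appendCLE_apply, lineMap_append, append_mem_smul_cayley_iff hA hne hl']
  refine ⟨fun i => hαβ i ▸ add_nonneg hα (hβ i), ?_, ?_⟩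
  · simp [AffineMap.pi_lineMap_apply, AffineMap.lineMap_apply_ring', Finset.sum_add_distrib,
      ← Finset.mul_sum, hml]
  · simp only [hsplit, hαβ, (hA _).add_smul hα (hβ _)]
    exact Set.finsetSum_mem_finsetSum _ _ _ fun i _ =>
      Set.add_mem_add (Set.smul_mem_smul_set (hp i)) (Set.smul_mem_smul_set (hq i))

theorem eq_one_of_append_mem_intrinsicInterior (hA : ∀ i, Convex ℝ (A i))
    (hne : ∀ i, (A i).Nonempty) (hl : 0 < l) (hm : IsLatticePt m)
    (hym : Fin.append y m ∈ intrinsicInterior ℝ ((l : ℝ) • cayley A)) : m = 1 := by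
  have hl' : (0 : ℝ) < l := Nat.cast_pos.2 hl
  have hpos i : 0 < m i := by
    obtain ⟨a, ha⟩ := hne i
    have h := pos_of_mem_intrinsicInterior hym (LinearMap.proj (Fin.natAdd n i)).toAffineMap
      (fun z hz => ?_) (Set.smul_mem_smul_set (append_single_mem_cayley ha)) (by simpa using hl')
    · simpa using h
    · obtain ⟨⟨y, m⟩, rfl⟩ := (appendCLE ℝ n l).surjective z
      simpa using ((append_mem_smul_cayley_iff hA hne hl').1 hz).1 i
  have hone i : 1 ≤ m i := by
    obtain ⟨k, hk⟩ := hm i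
    have := hpos i
    rw [hk] at this ⊢
    exact_mod_cast this
  have hsum : ∑ i, m i = ∑ _ : Fin l, (1 : ℝ) := by
    simpa using ((append_mem_smul_cayley_iff hA hne hl').1 (intrinsicInterior_subset hym)).2.1
  exact funext fun i =>
    ((Finset.sum_eq_sum_iff_of_le fun _ _ => hone _).1 hsum.symm i (Finset.mem_univ i)).symm

end RelativeInterior

section Faces

theorem toExposed_sum {E ι : Type*} [NormedAddCommGroup E] [NormedSpace ℝ E] [Fintype ι]
    (f : StrongDual ℝ E) (A : ι → Set E) :
    f.toExposed (∑ i, A i) = ∑ i, f.toExposed (A i) := by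
  classical
  ext x
  rw [Set.mem_fintype_sum]
  constructor
  · rintro ⟨hx, hmax⟩
    obtain ⟨a, ha, rfl⟩ := (Set.mem_fintype_sum _ _).1 hx
    refine ⟨a, fun i => ⟨ha i, fun q hq => ?_⟩, rfl⟩
    have h := sub_nonpos.2 (hmax _ (update_sum_mem_sum ha hq))
    rwa [← map_sub, sum_update_sub_sum, map_sub, sub_nonpos] at h
  · rintro ⟨a, ha, rfl⟩
    refine ⟨Set.finsetSum_mem_finsetSum _ _ _ fun i _ => (ha i).1, fun y hy => ?_⟩
    obtain ⟨q, hq, rfl⟩ := (Set.mem_fintype_sum _ _).1 hy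
    simp only [map_sum]
    exact Finset.sum_le_sum fun i _ => (ha i).2 _ (hq i)

variable {n l : ℕ} {A B : Fin l → Set (Fin n → ℝ)}

theorem toExposed_cayley (w : StrongDual ℝ (Fin (n + l) → ℝ)) (v : StrongDual ℝ (Fin n → ℝ))
    (c : Fin l → ℝ) (hw : ∀ i x, w (Fin.append x (Pi.single i 1)) = v x + c i)
    (hface : ∀ i, ∃ x ∈ A i, Fin.append x (Pi.single i 1) ∈ w.toExposed (cayley A)) :
    w.toExposed (cayley A) = cayley fun i => v.toExposed (A i) := by
  rw [cayley, toExposed_convexHull, toExposed_iUnion]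
  · simp only [toExposed_image w v _ _ (hw _), cayley]
  · intro i
    obtain ⟨x, hx, -, hmax⟩ := hface i
    exact ⟨_, ⟨x, hx, rfl⟩, Set.mem_iUnion_of_mem i ⟨x, hx, rfl⟩, fun y hy =>
      hmax y (subset_convexHull ℝ _ hy)⟩

theorem apply_natAdd_eq_zero_of_mem_toExposed_cayley {w : StrongDual ℝ (Fin (n + l) → ℝ)}
    {i : Fin l} (hi : ∀ x ∈ A i, Fin.append x (Pi.single i 1) ∉ w.toExposed (cayley A)) :
    ∀ z ∈ w.toExposed (cayley A), z (Fin.natAdd n i) = 0 := by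
  rw [cayley, toExposed_convexHull]
  refine convexHull_min (fun z hz => ?_)
    (convex_hyperplane (LinearMap.proj (R := ℝ) (Fin.natAdd n i)).isLinear 0)
  obtain ⟨j, x, hx, rfl⟩ := Set.mem_iUnion.1 hz.1
  have hij : i ≠ j := by
    rintro rfl
    exact hi x hx (toExposed_subset_toExposed_convexHull w _ hz)
  change Fin.append x (Pi.single j 1) (Fin.natAdd n i) = 0
  simp [hij]

theorem polyDim_smul_cayley_add_one_eq_iff (hA : ∀ i, Convex ℝ (A i))
    (hneA : ∀ i, (A i).Nonempty) (hB : ∀ i, Convex ℝ (B i)) (hneB : ∀ i, (B i).Nonempty)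
    (hl : 0 < l) :
    polyDim ((l : ℝ) • cayley B) + 1 = polyDim ((l : ℝ) • cayley A) ↔
      polyDim (∑ i, B i) + 1 = polyDim (∑ i, A i) := by
  have hdimA := polyDim_smul_cayley_add_one hA hneA hl
  have hdimB := polyDim_smul_cayley_add_one hB hneB hl
  lia

theorem exists_toExposed_cayley_eq {v : StrongDual ℝ (Fin n → ℝ)}
    (hne : ∀ i, (v.toExposed (A i)).Nonempty) :
    ∃ w : StrongDual ℝ (Fin (n + l) → ℝ),
      w.toExposed (cayley A) = cayley fun i => v.toExposed (A i) := by
  choose p hp using hne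
  let w : StrongDual ℝ (Fin (n + l) → ℝ) :=
    (v ∘L .fst ℝ _ _ - (∑ i, v (p i) • .proj i) ∘L .snd ℝ _ _) ∘L
      (appendCLE ℝ n l).symm.toContinuousLinearMap
  have hw i x : w (Fin.append x (Pi.single i 1)) = v x + -v (p i) := by
    simp [w, Pi.single_apply, sub_eq_add_neg]
  refine ⟨w, toExposed_cayley w v _ hw fun i => ⟨p i, (hp i).1, ?_⟩⟩
  refine toExposed_subset_toExposed_convexHull w _
    ⟨Set.mem_iUnion_of_mem i ⟨p i, (hp i).1, rfl⟩, fun z hz => ?_⟩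
  obtain ⟨j, x, hx, rfl⟩ := Set.mem_iUnion.1 hz
  simpa [hw] using (hp j).2 x hx

theorem exists_isFacet_smul_cayley (hA : ∀ i, Convex ℝ (A i)) (hl : 0 < l)
    {F : Set (Fin n → ℝ)} (hF : IsFacet (∑ i, A i) F) :
    ∃ B : Fin l → Set (Fin n → ℝ), (∀ i, Convex ℝ (B i)) ∧ (∀ i, (B i).Nonempty) ∧
      F = ∑ i, B i ∧ IsFacet ((l : ℝ) • cayley A) ((l : ℝ) • cayley B) := by
  obtain ⟨hexp, hFne, hdim⟩ := hF
  obtain ⟨v, hv⟩ : ∃ v : StrongDual ℝ (Fin n → ℝ), F = v.toExposed (∑ i, A i) := hexp hFne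
  rw [toExposed_sum] at hv
  subst hv
  obtain ⟨p, hp, -⟩ := (Set.mem_fintype_sum _ _).1 hFne.some_mem
  have hB i : Convex ℝ (v.toExposed (A i)) :=
    ContinuousLinearMap.toExposed.isExposed.convex (hA i)
  have hneB i : (v.toExposed (A i)).Nonempty := ⟨p i, hp i⟩
  obtain ⟨w, hw⟩ := exists_toExposed_cayley_eq hneB
  refine ⟨fun i => v.toExposed (A i), hB, hneB, rfl, fun _ => ⟨w, ?_⟩, ?_, ?_⟩
  · rw [← hw, ← toExposed_smul w _ (Nat.cast_pos.2 hl)]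
    rfl
  · exact ⟨_, Set.smul_mem_smul_set (append_single_mem_cayley (hp ⟨0, hl⟩))⟩
  · exact (polyDim_smul_cayley_add_one_eq_iff hA (fun i => ⟨p i, (hp i).1⟩) hB hneB hl).2 hdim

theorem isFacet_smul_cayley_cases (hA : ∀ i, Convex ℝ (A i)) (hne : ∀ i, (A i).Nonempty)
    (hl : 0 < l) {G : Set (Fin (n + l) → ℝ)} (hG : IsFacet ((l : ℝ) • cayley A) G) :
    (∃ i : Fin l, ∀ z ∈ G, z (Fin.natAdd n i) = 0) ∨
      ∃ B : Fin l → Set (Fin n → ℝ), (∀ i, IsExposed ℝ (A i) (B i)) ∧ (∀ i, (B i).Nonempty) ∧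
        G = (l : ℝ) • cayley B ∧ IsFacet (∑ i, A i) (∑ i, B i) := by
  obtain ⟨hexp, hGne, hdim⟩ := hG
  obtain ⟨w, hw⟩ : ∃ w : StrongDual ℝ (Fin (n + l) → ℝ),
    G = w.toExposed ((l : ℝ) • cayley A) := hexp hGne
  rw [toExposed_smul w _ (Nat.cast_pos.2 hl)] at hw
  by_cases hface : ∀ i, ∃ x ∈ A i, Fin.append x (Pi.single i 1) ∈ w.toExposed (cayley A)
  · right
    let v : StrongDual ℝ (Fin n → ℝ) := w ∘L (appendCLE ℝ n l).toContinuousLinearMap ∘L .inl ℝ _ _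
    have hwv i x : w (Fin.append x (Pi.single i 1)) = v x + w (Fin.append 0 (Pi.single i 1)) := by
      change _ = w (Fin.append x 0) + _
      rw [← map_add, append_add_append, add_zero, zero_add]
    have hcayley := toExposed_cayley w v _ hwv hface
    set B := fun i => v.toExposed (A i)
    have hB i : IsExposed ℝ (A i) (B i) := ContinuousLinearMap.toExposed.isExposed
    have hneB i : (B i).Nonempty := by
      obtain ⟨x, hx, -, hmax⟩ := hface i
      refine ⟨x, hx, fun y hy => ?_⟩
      have h := hmax _ (append_single_mem_cayley hy)
      rwa [hwv i x, hwv i y, add_le_add_iff_right] at h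
    rw [hcayley] at hw
    refine ⟨B, hB, hneB, hw, fun _ => ⟨v, (toExposed_sum v A).symm⟩, ?_, ?_⟩
    · choose b hb using hneB
      exact ⟨_, Set.finsetSum_mem_finsetSum _ _ _ fun i _ => hb i⟩
    · rwa [← polyDim_smul_cayley_add_one_eq_iff hA hne (fun i => (hB i).convex (hA i)) hneB hl,
        ← hw]
  · left
    push Not at hface
    obtain ⟨i, hi⟩ := hface
    refine ⟨i, fun z hz => ?_⟩
    rw [hw] at hz
    obtain ⟨z, hz, rfl⟩ := hz
    simp [apply_natAdd_eq_zero_of_mem_toExposed_cayley hi z hz]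

end Faces

section Reflexive

theorem isLatticePt_iff_forall_mem_range {d : ℕ} {x : Fin d → ℝ} :
    IsLatticePt x ↔ ∀ i, x i ∈ (Int.castRingHom ℝ).range := by
  simp only [IsLatticePt, RingHom.mem_range, eq_intCast, eq_comm]

namespace IsLatticePolytope

variable {d : ℕ} {P F : Set (Fin d → ℝ)}

theorem convex (hP : IsLatticePolytope P) : Convex ℝ P := by
  obtain ⟨V, -, -, rfl⟩ := hP
  exact convex_convexHull ℝ _

theorem nonempty (hP : IsLatticePolytope P) : P.Nonempty := by
  obtain ⟨V, hV, -, rfl⟩ := hP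
  exact hV.to_set.convexHull

theorem exists_isLatticePt_mem (hP : IsLatticePolytope P) (hF : IsExposed ℝ P F)
    (hne : F.Nonempty) : ∃ x ∈ F, IsLatticePt x := by
  obtain ⟨V, -, hV, rfl⟩ := hP
  obtain ⟨f, hf⟩ : ∃ f : StrongDual ℝ (Fin d → ℝ), F = f.toExposed (convexHull ℝ V) := hF hne
  rw [hf, toExposed_convexHull, convexHull_nonempty_iff] at hne
  obtain ⟨x, hx⟩ := hne
  exact ⟨x, hf ▸ toExposed_subset_toExposed_convexHull f _ hx, hV x hx.1⟩

end IsLatticePolytope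

variable {n l : ℕ} {A : Fin l → Set (Fin n → ℝ)}

theorem isLatticePt_cayleyRetraction {a : Fin l → Fin n → ℝ} (ha : ∀ i, IsLatticePt (a i))
    {z : Fin (n + l) → ℝ} (hz : IsLatticePt z) : IsLatticePt (cayleyRetraction a z) := by
  obtain ⟨⟨y, m⟩, rfl⟩ := (appendCLE ℝ n l).surjective z
  obtain ⟨hy, hm⟩ := isLatticePt_append.1 hz
  simp only [isLatticePt_iff_forall_mem_range] at ha hy hm ⊢
  intro k
  simp only [appendCLE_apply, cayleyRetraction_append, Pi.add_apply, Finset.sum_apply,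
    Pi.smul_apply, smul_eq_mul]
  exact add_mem (hy k) (sum_mem fun i _ => mul_mem (sub_mem (one_mem _) (hm i)) (ha i k))

theorem isReflexivePolytope_sum_of_smul_cayley (hA : ∀ i, Convex ℝ (A i))
    (hne : ∀ i, (A i).Nonempty) (hl : 0 < l) (h : IsReflexivePolytope ((l : ℝ) • cayley A)) :
    IsReflexivePolytope (∑ i, A i) := by
  obtain ⟨z, hz, hzlat, hfacets⟩ := h
  obtain ⟨⟨x, m⟩, rfl⟩ := (appendCLE ℝ n l).surjective z
  rw [appendCLE_apply] at hz hzlat hfacets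
  obtain ⟨hx, hm⟩ := isLatticePt_append.1 hzlat
  obtain rfl : m = 1 := eq_one_of_append_mem_intrinsicInterior hA hne hl hm hz
  refine ⟨x, mem_intrinsicInterior_of_append_one hA hne hl hz, hx, fun F hF => ?_⟩
  obtain ⟨B, hB, hneB, rfl, hfacet⟩ := exists_isFacet_smul_cayley hA hl hF
  obtain ⟨u, hu, hux⟩ := hfacets _ hfacet
  refine ⟨u.comp (cayleySlice n l), fun y hy hylat => ?_, fun y hy => ?_⟩
  · simpa using hu _ ((append_one_mem_affineSpan_iff hA hne hl).2 hy)
      (isLatticePt_append.2 ⟨hylat, fun _ => ⟨1, by simp⟩⟩)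
  · simpa using hux _ ((append_one_mem_smul_cayley_iff hB hneB hl).2 hy)

theorem isReflexivePolytope_smul_cayley_of_sum (hA : ∀ i, IsLatticePolytope (A i))
    (hl : 0 < l) (h : IsReflexivePolytope (∑ i, A i)) :
    IsReflexivePolytope ((l : ℝ) • cayley A) := by
  have hconv i := (hA i).convex
  have hne i := (hA i).nonempty
  obtain ⟨x, hx, hxlat, hfacets⟩ := h
  refine ⟨Fin.append x 1, append_one_mem_intrinsicInterior hconv hne hl hx,
    isLatticePt_append.2 ⟨hxlat, fun _ => ⟨1, by simp⟩⟩, fun G hG => ?_⟩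
  obtain ⟨i, hi⟩ | ⟨B, hexp, hneB, rfl, hfacet⟩ := isFacet_smul_cayley_cases hconv hne hl hG
  · refine ⟨-(LinearMap.proj (Fin.natAdd n i)).toAffineMap, fun z _ hz => ?_, fun z hz => ?_⟩
    · obtain ⟨k, hk⟩ := hz (Fin.natAdd n i)
      exact ⟨-k, by simp [hk]⟩
    · simp [hi z hz]
  · obtain ⟨u, hu, hux⟩ := hfacets _ hfacet
    choose p hp hplat using fun i => (hA i).exists_isLatticePt_mem (hexp i) (hneB i)
    refine ⟨u.comp (cayleyRetraction p), fun z hz hzlat => ?_, fun z hz => ?_⟩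
    · exact hu _ (cayleyRetraction_mem_affineSpan hconv hl (fun i => (hexp i).subset (hp i)) hz)
        (isLatticePt_cayleyRetraction hplat hzlat)
    · have hconst : Set.EqOn u (AffineMap.const ℝ _ (u x + 1)) (affineSpan ℝ (∑ i, B i)) :=
        AffineMap.eqOn_affineSpan hux
      simpa using hconst (cayleyRetraction_mem_affineSpan (fun i => (hexp i).convex (hconv i)) hl
        hp (subset_affineSpan ℝ _ hz))

end Reflexive

theorem stmt11_general {n l : ℕ} (hl : 0 < l) (P : Fin l → Set (Fin n → ℝ))
    (hP : ∀ i, IsLatticePolytope (P i)) :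
    IsGorensteinOfCodeg (cayley P) l ↔ IsReflexivePolytope (∑ i, P i) :=
  ⟨fun h => isReflexivePolytope_sum_of_smul_cayley (fun i => (hP i).convex)
    (fun i => (hP i).nonempty) hl h.2,
    fun h => ⟨hl, isReflexivePolytope_smul_cayley_of_sum hP hl h⟩⟩

/-- The Cayley polytope `P_1 * ⋯ * P_l` of lattice polytopes in `ℝ^n` whose Minkowski sum
is `n`-dimensional is a Gorenstein polytope of codegree `l` iff `P_1 + ⋯ + P_l` is
reflexive. -/
theorem stmt11 {n l : ℕ} (hl : 0 < l) (P : Fin l → Set (Fin n → ℝ))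
    (hP : ∀ i, IsLatticePolytope (P i)) (hdim : polyDim (∑ i, P i) = n) :
    IsGorensteinOfCodeg (cayley P) l ↔ IsReflexivePolytope (∑ i, P i) :=
  stmt11_general hl P hP
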